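/- arXiv:1902.08144 — 3 statements merged into one kernel-verified Lean document; each statement's English description precedes it below -/
import Mathlib

section
/- Let A be an integrally closed residuated lattice. Then for all a, b ∈ A: a\b = e if and only if b/a = e. -/
/-- A residuated lattice: a lattice-ordered monoid with left and right residuals,
i.e. `b ≤ a\c ↔ a*b ≤ c ↔ a ≤ c/b`.  `ldiv a c` denotes `a\c` and `rdiv c b` denotes `c/b`. -/
class ResiduatedLattice (α : Type*) extends Lattice α, Monoid α where
  ldiv : α → α → α
  rdiv : α → α → α
  le_ldiv_iff : ∀ a b c : α, b ≤ ldiv a c ↔ a * b ≤ c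
  le_rdiv_iff : ∀ a b c : α, a ≤ rdiv c b ↔ a * b ≤ c

open ResiduatedLattice

theorem rl_mul_left {α : Type*} [ResiduatedLattice α] {a b : α} (h : a ≤ b) (c : α) :
    c * a ≤ c * b :=
  (le_ldiv_iff c a (c * b)).1 (h.trans ((le_ldiv_iff c b (c * b)).2 le_rfl))

theorem rl_mul_right {α : Type*} [ResiduatedLattice α] {a b : α} (h : a ≤ b) (c : α) :
    a * c ≤ b * c :=
  (le_rdiv_iff a c (b * c)).1 (h.trans ((le_rdiv_iff b c (b * c)).2 le_rfl))

/-- In an integrally closed residuated lattice, `a\b = e` iff `b/a = e`. -/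
theorem ldiv_eq_one_iff_rdiv_eq_one {α : Type*} [ResiduatedLattice α]
    (hic : ∀ a : α, ldiv a a = 1 ∧ rdiv a a = 1) :
    ∀ a b : α, ldiv a b = 1 ↔ rdiv b a = 1 := by
  have hl : ∀ x y : α, x * y ≤ x → y ≤ 1 := fun x y h =>
    (hic x).1 ▸ (le_ldiv_iff x y x).2 h
  have hr : ∀ x y : α, y * x ≤ x → y ≤ 1 := fun x y h =>
    (hic x).2 ▸ (le_rdiv_iff y x x).2 h
  have cyc : ∀ x y : α, x * y ≤ 1 → y * x ≤ 1 := by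
    intro x y h
    apply hr y
    have := rl_mul_left h y
    rwa [mul_one, ← mul_assoc] at this
  intro a b
  constructor
  · intro h
    have hab : a ≤ b := by
      have := (le_ldiv_iff a 1 b).1 h.ge
      rwa [mul_one] at this
    apply le_antisymm
    · have h1 : rdiv 1 a * a ≤ 1 := (le_rdiv_iff _ _ _).1 le_rfl
      have h2 : rdiv 1 a * b ≤ 1 := by
        refine le_trans ?_ h.le
        rw [le_ldiv_iff, ← mul_assoc]
        simpa using rl_mul_right (cyc _ _ h1) b
      have h3 : rdiv b a * a ≤ b := (le_rdiv_iff _ _ _).1 le_rfl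
      apply hl (rdiv 1 a)
      rw [le_rdiv_iff, mul_assoc]
      exact (rl_mul_left h3 _).trans h2
    · rw [le_rdiv_iff, one_mul]
      exact hab
  · intro h
    have hab : a ≤ b := by
      have := (le_rdiv_iff 1 a b).1 h.ge
      rwa [one_mul] at this
    apply le_antisymm
    · have h1 : a * ldiv a 1 ≤ 1 := (le_ldiv_iff _ _ _).1 le_rfl
      have h2 : b * ldiv a 1 ≤ 1 := by
        refine le_trans ?_ h.le
        rw [le_rdiv_iff, mul_assoc]
        simpa using rl_mul_left (cyc _ _ h1) b
      have h3 : a * ldiv a b ≤ b := (le_ldiv_iff _ _ _).1 le_rfl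
      apply hr (ldiv a 1)
      rw [le_ldiv_iff, ← mul_assoc]
      exact (rl_mul_right h3 _).trans h2
    · rw [le_ldiv_iff, mul_one]
      exact hab
end

section
/- Let M be a semi-integral residuated pomonoid and write ~a := a\e (= e/a). Then ~(a\b) = ~b/~a and ~(b/a) = ~a\~b for all a, b ∈ M. -/
/-- A semi-integral residuated pomonoid (sirmonoid): a partially ordered monoid with
left and right residuals, i.e. `b ≤ a\c ↔ a*b ≤ c ↔ a ≤ c/b`, in which the monoid
unit `e` is a maximal element.  `ldiv a c` denotes `a\c` and `rdiv c b` denotes `c/b`. -/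
class Sirmonoid (α : Type*) extends PartialOrder α, Monoid α where
  ldiv : α → α → α
  rdiv : α → α → α
  le_ldiv_iff : ∀ a b c : α, b ≤ ldiv a c ↔ a * b ≤ c
  le_rdiv_iff : ∀ a b c : α, a ≤ rdiv c b ↔ a * b ≤ c
  one_maximal : ∀ a : α, 1 ≤ a → a = 1

open Sirmonoid

theorem sir_mul_mono_left {α : Type*} [Sirmonoid α] {a b : α} (c : α) (h : a ≤ b) :
    c * a ≤ c * b :=
  (le_ldiv_iff _ _ _).1 (h.trans ((le_ldiv_iff _ _ _).2 le_rfl))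

theorem sir_mul_mono_right {α : Type*} [Sirmonoid α] {a b : α} (c : α) (h : a ≤ b) :
    a * c ≤ b * c :=
  (le_rdiv_iff _ _ _).1 (h.trans ((le_rdiv_iff _ _ _).2 le_rfl))

/-- An element above an element below the unit is itself below the unit. -/
theorem sir_up {α : Type*} [Sirmonoid α] {w z : α} (hw : w ≤ 1) (hz : w ≤ z) : z ≤ 1 := by
  have h1 : rdiv z w = 1 := one_maximal _ ((le_rdiv_iff _ _ _).2 (by simpa using hz))
  have h2 : z ≤ rdiv z w :=
    (le_rdiv_iff _ _ _).2 (by simpa using sir_mul_mono_left z hw)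
  rwa [h1] at h2

theorem sir_comm {α : Type*} [Sirmonoid α] {x y : α} (h : x * y ≤ 1) : y * x ≤ 1 := by
  have h1 : ldiv x x = 1 := one_maximal _ ((le_ldiv_iff _ _ _).2 (by simp))
  have h2 : y * x ≤ ldiv x x :=
    (le_ldiv_iff _ _ _).2 (by simpa [mul_assoc] using sir_mul_mono_right x h)
  rwa [h1] at h2

theorem sir_iff {α : Type*} [Sirmonoid α] {a b : α} (z : α) (h : a ≤ b) :
    a * z ≤ 1 ↔ b * z ≤ 1 :=
  ⟨fun k => sir_up k (sir_mul_mono_right z h), fun k => (sir_mul_mono_right z h).trans k⟩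

/-- In any sirmonoid, `~(a\b) = ~b/~a` and `~(b/a) = ~a\~b`,
where `~a := a\e = e/a`. -/
theorem sirmonoid_not_ldiv_eq {α : Type*} [Sirmonoid α] :
    ∀ a b : α, ldiv (ldiv a b) 1 = rdiv (ldiv b 1) (ldiv a 1) ∧
      ldiv (rdiv b a) 1 = ldiv (ldiv a 1) (ldiv b 1) := by
  intro a b
  have n1 : a * ldiv a 1 ≤ 1 := (le_ldiv_iff _ _ _).1 le_rfl
  have n2 : ldiv a 1 * a ≤ 1 := sir_comm n1
  have l : a * ldiv a b ≤ b := (le_ldiv_iff _ _ _).1 le_rfl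
  have r : rdiv b a * a ≤ b := (le_rdiv_iff _ _ _).1 le_rfl
  constructor
  · apply eq_of_forall_le_iff
    intro z
    rw [le_ldiv_iff, le_rdiv_iff, le_ldiv_iff]
    have h1 : ldiv a 1 * a * ldiv a b ≤ ldiv a b := by
      simpa using sir_mul_mono_right (ldiv a b) n2
    have h2 : ldiv a 1 * a * ldiv a b ≤ ldiv a 1 * b := by
      simpa [mul_assoc] using sir_mul_mono_left (ldiv a 1) l
    rw [← sir_iff z h1, sir_iff z h2, mul_assoc, ← mul_assoc b]
    exact ⟨sir_comm, sir_comm⟩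
  · apply eq_of_forall_le_iff
    intro z
    rw [le_ldiv_iff, le_ldiv_iff, le_ldiv_iff, ← mul_assoc]
    have h1 : rdiv b a * (a * ldiv a 1) ≤ rdiv b a := by
      simpa using sir_mul_mono_left (rdiv b a) n1
    have h2 : rdiv b a * (a * ldiv a 1) ≤ b * ldiv a 1 := by
      simpa [mul_assoc] using sir_mul_mono_right (ldiv a 1) r
    rw [← sir_iff z h1, sir_iff z h2]
end

section
/- Let M be a semi-integral residuated pomonoid and write ~a := a\e (= e/a). Then ~~(a·(~a)) = e for all a ∈ M; that is, in the image of the nucleus α(a) = ~~a (with product a ∗ b := ~~(a·b)), every element α(a) is invertible with inverse ~a, so the image is a group. -/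
open Sirmonoid

theorem sirm_comm {α : Type*} [Sirmonoid α] (a b : α) (h : a * b ≤ 1) : b * a ≤ 1 := by
  have h1 : (1 : α) ≤ rdiv a a := (le_rdiv_iff 1 a a).2 (by rw [one_mul])
  have h2 : a * b * a ≤ a := (le_rdiv_iff (a * b) a a).1 (h.trans h1)
  have h3 : b * a ≤ ldiv a a := (le_ldiv_iff a (b * a) a).2 (by rwa [← mul_assoc])
  have h4 : ldiv a a = 1 := one_maximal _ ((le_ldiv_iff a 1 a).2 (by rw [mul_one]))
  rwa [h4] at h3

theorem sirm_neg {α : Type*} [Sirmonoid α] (x : α) (h : x ≤ 1) : ldiv x 1 = 1 :=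
  one_maximal _ ((le_ldiv_iff x 1 1).2 (by rwa [mul_one]))

theorem sirm_negneg {α : Type*} [Sirmonoid α] (x : α) (h : x ≤ 1) :
    ldiv (ldiv x 1) 1 = 1 := by
  rw [sirm_neg x h, sirm_neg 1 le_rfl]

theorem sirm_mul_neg {α : Type*} [Sirmonoid α] (x : α) : x * ldiv x 1 ≤ 1 :=
  (le_ldiv_iff x _ 1).1 le_rfl

/-- In any sirmonoid, `~~(a·(~a)) = e` for all `a`; in the image of the nucleus
`α(a) = ~~a`, with product `a ∗ b := ~~(a·b)`, every element `α(a)` is invertible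
with inverse `~a` (so the image is a group).  Here `~a := a\e = e/a`. -/
theorem sirmonoid_notnot_mul_not_eq_one {α : Type*} [Sirmonoid α] :
    ∀ a : α, ldiv (ldiv (a * ldiv a 1) 1) 1 = 1 ∧
      ldiv (ldiv (ldiv (ldiv a 1) 1 * ldiv a 1) 1) 1 = 1 ∧
      ldiv (ldiv (ldiv a 1 * ldiv (ldiv a 1) 1) 1) 1 = 1 := by
  intro a
  exact ⟨sirm_negneg _ (sirm_mul_neg a), sirm_negneg _ (sirm_comm _ _ (sirm_mul_neg _)),
    sirm_negneg _ (sirm_mul_neg _)⟩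
end
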